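/- Let R be a left Noetherian ring. The following are equivalent: (1) R has a left Artinian left quotient ring Q = C⁻¹R; (2) C' ⊆ C; (3) for each element ᾱ ∈ C̄ there exists a regular element c ∈ C such that ᾱ = c + n (every regular element of R̄ lifts to a regular element of R). -/

import Mathlib

open Function

universe u v

/-- A regular element of a ring: a two-sided non-zero-divisor. -/
def IsRegElem {R : Type*} [Ring R] (c : R) : Prop :=
  (∀ x : R, c * x = 0 → x = 0) ∧ (∀ x : R, x * c = 0 → x = 0)

/-- The set `C` of regular elements of a ring. -/
def regSet (R : Type*) [Ring R] : Set R := {c : R | IsRegElem c}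

/-- A (left) ideal is two-sided. -/
def Ideal.IsTwoSidedNC {R : Type*} [Ring R] (I : Ideal R) : Prop :=
  ∀ a ∈ I, ∀ r : R, a * r ∈ I

/-- A prime (two-sided) ideal of a possibly noncommutative ring. -/
def Ideal.IsPrimeNC {R : Type*} [Ring R] (P : Ideal R) : Prop :=
  P ≠ ⊤ ∧ P.IsTwoSidedNC ∧ ∀ a b : R, (∀ r : R, a * r * b ∈ P) → a ∈ P ∨ b ∈ P

/-- The prime radical `n` of a ring: the intersection of all prime ideals. -/
def primeRadical (R : Type*) [Ring R] : Ideal R := sInf {P : Ideal R | P.IsPrimeNC}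

/-- `n` is a nilpotent ideal. -/
def IsNilpotentIdeal {R : Type*} [Ring R] (I : Ideal R) : Prop := ∃ k : ℕ, I ^ (k + 1) = ⊥

/-- `φ : R →+* Q` realizes `Q` as a left quotient ring `C⁻¹R` of `R`:  `R` embeds in `Q`,
every regular element of `R` becomes invertible in `Q`, and every element of `Q` has the
form `(φ c)⁻¹ * (φ r)` with `c` regular. -/
structure IsLeftQuotRing {R : Type u} {Q : Type v} [Ring R] [Ring Q] (φ : R →+* Q) : Prop where
  inj : Function.Injective φ
  isUnit : ∀ c : R, IsRegElem c → IsUnit (φ c)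
  denom : ∀ q : Q, ∃ c r : R, IsRegElem c ∧ φ c * q = φ r

/-- Data of a left quotient ring of `R`. -/
structure LeftQuotData (R : Type u) [Ring R] : Type (u + 1) where
  Q : Type u
  [instQ : Ring Q]
  φ : R →+* Q
  quot : IsLeftQuotRing φ

attribute [instance] LeftQuotData.instQ

/-- `R` has a left Artinian left quotient ring `Q = C⁻¹R`. -/
def HasArtinianLeftQuot (R : Type u) [Ring R] : Prop :=
  ∃ d : LeftQuotData R, IsArtinianRing d.Q

/-- A subset of a ring is a left annihilator. -/
def IsLeftAnnihilatorSet {R : Type*} [Ring R] (A : Set R) : Prop :=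
  ∃ S : Set R, A = {r : R | ∀ s ∈ S, r * s = 0}

/-- The ascending chain condition on left annihilators. -/
def ACCLeftAnnihilators (R : Type*) [Ring R] : Prop :=
  ∀ f : ℕ → Set R, (∀ i, IsLeftAnnihilatorSet (f i)) → (∀ i j, i ≤ j → f i ⊆ f j) →
    ∃ N, ∀ k, N ≤ k → f k = f N

/-- The module `M` contains no infinite direct sum of nonzero submodules. -/
def NoInfiniteIndepFamily (R : Type*) (M : Type*) [Ring R] [AddCommGroup M] [Module R M] : Prop :=
  ¬ ∃ f : ℕ → Submodule R M, (∀ i, f i ≠ ⊥) ∧ iSupIndep f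

/-- A left Goldie ring: ACC on left annihilators and no infinite direct sums of nonzero
left ideals. -/
def IsLeftGoldie (R : Type*) [Ring R] : Prop :=
  ACCLeftAnnihilators R ∧ NoInfiniteIndepFamily R R

/-- The subquotient `n^i/n^{i+1}` of `R` determined by the prime radical `n`. -/
abbrev grPiece (R : Type*) [Ring R] (i : ℕ) :=
  ↥(primeRadical R ^ i) ⧸
    (Submodule.comap (primeRadical R ^ i : Ideal R).subtype (primeRadical R ^ (i + 1)))

/-- The class of `x ∈ n^i` in `n^i/n^{i+1}`. -/
def grMk {R : Type*} [Ring R] (i : ℕ) (x : R) (hx : x ∈ primeRadical R ^ i) : grPiece R i :=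
  Submodule.Quotient.mk ⟨x, hx⟩

/-- The `C̄`-torsion submodule `τ_i` of `n^i/n^{i+1}` (take the span, which coincides with the
set of torsion elements whenever the latter is a submodule, e.g. when `C̄` is a left Ore set);
here `C̄` is represented through `π : R → R̄` as `{c : R | IsRegElem (π c)}`. -/
def tauSub {R : Type u} {Rbar : Type v} [Ring R] [Ring Rbar] (π : R →+* Rbar) (i : ℕ) :
    Submodule R (grPiece R i) :=
  Submodule.span R {u : grPiece R i | ∃ c : R, IsRegElem (π c) ∧ c • u = 0}

/-- The `C̄`-torsionfree module `f_i = (n^i/n^{i+1})/τ_i`. -/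
abbrev fMod {R : Type u} {Rbar : Type v} [Ring R] [Ring Rbar] (π : R →+* Rbar) (i : ℕ) :=
  grPiece R i ⧸ tauSub π i

/-- The class of `x ∈ n^i` in `f_i`. -/
def fMk {R : Type u} {Rbar : Type v} [Ring R] [Ring Rbar] (π : R →+* Rbar) (i : ℕ) (x : R)
    (hx : x ∈ primeRadical R ^ i) : fMod π i :=
  Submodule.Quotient.mk (grMk i x hx)

/-- The subset `C⁻¹K = {(φ c)⁻¹ (φ a) : c ∈ C, a ∈ K}` of a left quotient ring. -/
def locSet {R : Type u} {Q : Type v} [Ring R] [Ring Q] (φ : R →+* Q) (K : Ideal R) : Set Q :=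
  {q : Q | ∃ c a : R, IsRegElem c ∧ a ∈ K ∧ φ c * q = φ a}

/-- A subset of a ring is a left Ore set (multiplicatively closed and satisfying the left
Ore condition). -/
def IsLeftOreSubset {A : Type*} [Ring A] (S : Set A) : Prop :=
  (1 : A) ∈ S ∧ (∀ s ∈ S, ∀ t ∈ S, s * t ∈ S) ∧
    ∀ s ∈ S, ∀ a : A, ∃ t ∈ S, ∃ b : A, t * a = b * s

/-- A left denominator set. -/
def IsLeftDenominatorSet {A : Type*} [Ring A] (S : Set A) : Prop :=
  IsLeftOreSubset S ∧ ∀ a : A, ∀ s ∈ S, a * s = 0 → ∃ t ∈ S, t * a = 0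


/-- A left ideal meeting every nonzero left ideal nontrivially. -/
def IsEssentialLeft {S : Type*} [Ring S] (E : Ideal S) : Prop :=
  ∀ x : S, x ≠ 0 → ∃ r : S, r * x ≠ 0 ∧ r * x ∈ E

/-- A ring `S` is semiprime: `b S b = 0` forces `b = 0`. -/
def IsSemiprimeNC (S : Type*) [Ring S] : Prop :=
  ∀ b : S, (∀ r : S, b * r * b = 0) → b = 0

section Noetherian

variable {S : Type*} [Ring S] [IsNoetherianRing S]

theorem exists_maximal_leftIdeal (P : Ideal S → Prop) (h : ∃ K, P K) :
    ∃ K, P K ∧ ∀ L, P L → K ≤ L → L ≤ K := by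
  obtain ⟨K, hK, hmax⟩ :=
    (set_has_maximal_iff_noetherian (R := S) (M := S)).mpr inferInstance {K | P K} h
  exact ⟨K, hK, fun L hL hKL => by
    by_contra hn
    exact hmax L hL (lt_of_le_not_ge hKL hn)⟩

/-- Along a descending chain of left ideals of a left Noetherian ring, all inclusions are
eventually essential. -/
theorem exists_eventually_essential (f : ℕ → Ideal S) (hf : Antitone f) :
    ∃ n, ∀ m, n ≤ m → ∀ x ∈ f n, x ≠ 0 → ∃ r : S, r * x ≠ 0 ∧ r * x ∈ f m := by
  obtain ⟨K, ⟨n, hn⟩, hmax⟩ := exists_maximal_leftIdeal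
    (fun K : Ideal S => ∃ n, ∀ x ∈ K, x ∈ f n → x = 0) ⟨⊥, 0, fun x hx _ => by simpa using hx⟩
  refine ⟨n, fun m hm x hx hx0 => ?_⟩
  by_contra! hno
  have hle := hmax (K ⊔ Ideal.span {x}) ⟨m, fun y hy hym => ?_⟩ le_sup_left
  · exact hx0 (hn x (hle (Ideal.mem_sup_right (Ideal.mem_span_singleton_self x))) hx)
  · obtain ⟨k, hk, l, hl, rfl⟩ := Submodule.mem_sup.mp hy
    obtain ⟨r, rfl⟩ := Ideal.mem_span_singleton'.mp hl
    have hk0 : k = 0 := by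
      refine hn k hk ?_
      have := (f n).sub_mem (hf hm hym) ((f n).mul_mem_left r hx)
      simpa using this
    subst hk0
    by_contra h0
    rw [zero_add] at h0 hym
    exact hno r h0 hym

/-- In a semiprime left Noetherian ring, `S a` nil forces `a = 0`. -/
theorem IsSemiprimeNC.eq_zero_of_nil (hS : IsSemiprimeNC S) (a : S)
    (ha : ∀ r : S, IsNilpotent (r * a)) : a = 0 := by
  by_contra ha0
  have ha' : ∀ r : S, IsNilpotent (a * r) := fun r => by
    obtain ⟨n, hn⟩ := ha r
    refine ⟨n + 1, ?_⟩
    have : (a * r) ^ (n + 1) = a * (r * a) ^ n * r := by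
      rw [pow_succ, ← mul_assoc, ← mul_pow_mul]
    rw [this, hn]; simp
  obtain ⟨K, ⟨s, hs0, rfl⟩, hmax⟩ := exists_maximal_leftIdeal
    (fun K : Ideal S => ∃ s, a * s ≠ 0 ∧ K = LinearMap.ker (LinearMap.mulRight S (a * s)))
    ⟨_, 1, by simpa using ha0, rfl⟩
  refine hs0 (hS _ fun r => ?_)
  have hnil : IsNilpotent (a * s * r) := by rw [mul_assoc]; exact ha' _
  by_cases h0 : a * s * r = 0
  · rw [h0, zero_mul]
  have hne : Nontrivial S := ⟨⟨_, _, h0⟩⟩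
  have hpos := pos_nilpotencyClass_iff.mpr hnil
  obtain ⟨k, hk⟩ : ∃ k, nilpotencyClass (a * s * r) = k + 2 := by
    have h1 : nilpotencyClass (a * s * r) ≠ 1 := by
      rw [Ne, nilpotencyClass_eq_one]; exact h0
    exact ⟨nilpotencyClass (a * s * r) - 2, by omega⟩
  have hz : (a * s * r) ^ (k + 2) = 0 := hk ▸ pow_nilpotencyClass hnil
  have hnz : (a * s * r) ^ (k + 1) ≠ 0 := by
    intro h
    have h2 : nilpotencyClass (a * s * r) ≤ k + 1 := Nat.sInf_le h
    omega
  have heq : (a * s * r) ^ (k + 1) = a * (s * r * (a * s * r) ^ k) := by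
    rw [pow_succ']; simp only [mul_assoc]
  have hle := hmax _ ⟨s * r * (a * s * r) ^ k, by rwa [← heq], rfl⟩ (by
    intro x hx
    rw [LinearMap.mem_ker, LinearMap.mulRight_apply] at hx ⊢
    have : x * (a * (s * r * (a * s * r) ^ k)) = x * (a * s) * (r * (a * s * r) ^ k) := by
      simp only [mul_assoc]
    rw [this, hx, zero_mul])
  have hmem : a * s * r ∈ LinearMap.ker
      (LinearMap.mulRight S (a * (s * r * (a * s * r) ^ k))) := by
    rw [LinearMap.mem_ker, LinearMap.mulRight_apply, ← heq, ← pow_succ', hz]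
  simpa [mul_assoc] using hle hmem

/-- A nonzero left ideal of a semiprime left Noetherian ring contains a nonzero `b` with
`l(b²) = l(b)`. -/
theorem IsSemiprimeNC.exists_sq_ann (hS : IsSemiprimeNC S) (L : Ideal S) {a : S} (ha : a ∈ L)
    (ha0 : a ≠ 0) : ∃ b ∈ L, b ≠ 0 ∧ ∀ r, r * b * b = 0 → r * b = 0 := by
  obtain ⟨r, hr⟩ : ∃ r, ¬ IsNilpotent (r * a) := by
    by_contra! h
    exact ha0 (hS.eq_zero_of_nil a h)
  set x := r * a with hx
  have hxL : x ∈ L := L.mul_mem_left _ ha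
  let f : ℕ →o Ideal S := ⟨fun n => LinearMap.ker (LinearMap.mulRight S (x ^ n)), by
    refine monotone_nat_of_le_succ fun n y hy => ?_
    rw [LinearMap.mem_ker, LinearMap.mulRight_apply] at hy ⊢
    rw [pow_succ, ← mul_assoc, hy, zero_mul]⟩
  obtain ⟨n, hn⟩ := (monotone_stabilizes_iff_noetherian (R := S) (M := S)).mpr inferInstance f
  refine ⟨x ^ (n + 1), ?_, fun h => hr ⟨_, h⟩, fun s hs => ?_⟩
  · rw [pow_succ]; exact L.mul_mem_left _ hxL
  · rw [mul_assoc, ← pow_add] at hs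
    have h1 : s ∈ f n := by
      rw [hn (n + 1 + (n + 1)) (by omega)]; simpa [f] using hs
    have h2 : s * x ^ n = 0 := by simpa [f] using h1
    rw [pow_succ, ← mul_assoc, h2, zero_mul]

/-- An essential left ideal of a semiprime left Noetherian ring contains an element with zero
left annihilator. -/
theorem IsSemiprimeNC.exists_leftAnn_eq_zero (hS : IsSemiprimeNC S) {E : Ideal S}
    (hE : IsEssentialLeft E) : ∃ c ∈ E, ∀ r, r * c = 0 → r = 0 := by
  obtain ⟨K, ⟨a, haE, ha, hKa⟩, hmax⟩ := exists_maximal_leftIdeal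
    (fun K : Ideal S => ∃ a ∈ E, (∀ r, r * a * a = 0 → r * a = 0) ∧ ∀ k ∈ K, k * a = 0 → k = 0)
    ⟨⊥, 0, E.zero_mem, by simp, fun k hk _ => by simpa using hk⟩
  refine ⟨a, haE, fun r hr => ?_⟩
  by_contra hr0
  obtain ⟨t, ht0, htE⟩ := hE r hr0
  obtain ⟨b, ⟨hbE, hba⟩, hb0, hb⟩ := hS.exists_sq_ann
    (E ⊓ LinearMap.ker (LinearMap.mulRight S a)) (a := t * r)
    ⟨htE, by simp [mul_assoc, hr]⟩ ht0
  replace hba : b * a = 0 := by simpa using hba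
  have hann : ∀ s, s * (a + b) = 0 → s * a = 0 ∧ s * b = 0 := by
    intro s hs
    have hsa : s * a = 0 := by
      apply ha
      have : s * (a + b) * a = s * a * a + s * (b * a) := by noncomm_ring
      rw [hs, hba, zero_mul, mul_zero, add_zero] at this
      exact this.symm
    exact ⟨hsa, by simpa [mul_add, hsa] using hs⟩
  have hle := hmax (K ⊔ Ideal.span {b}) ⟨a + b, E.add_mem haE hbE, ?_, ?_⟩ le_sup_left
  · exact hb0 (hKa b (hle (Ideal.mem_sup_right (Ideal.mem_span_singleton_self b))) hba)
  · intro s hs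
    obtain ⟨h1, h2⟩ := hann _ hs
    have h3 : s * a = 0 := by
      apply ha
      have : s * (a + b) * a = s * a * a + s * (b * a) := by noncomm_ring
      rw [h1, hba, mul_zero, add_zero] at this
      exact this.symm
    have h4 : s * b = 0 := by
      apply hb
      have : s * (a + b) * b = s * a * b + s * b * b := by noncomm_ring
      rw [h2, h3, zero_mul, zero_add] at this
      exact this.symm
    rw [mul_add, h3, h4, add_zero]
  · intro y hy hyc
    obtain ⟨k, hk, l, hl, rfl⟩ := Submodule.mem_sup.mp hy
    obtain ⟨s, rfl⟩ := Ideal.mem_span_singleton'.mp hl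
    obtain ⟨h1, h2⟩ := hann _ hyc
    have hk0 : k = 0 := by
      refine hKa k hk ?_
      rwa [add_mul, mul_assoc, hba, mul_zero, add_zero] at h1
    subst hk0
    rw [zero_add] at h2 ⊢
    exact hb s h2

/-- A semiprime left Noetherian ring is left nonsingular. -/
theorem IsSemiprimeNC.eq_zero_of_essential_ann (hS : IsSemiprimeNC S) {E : Ideal S}
    (hE : IsEssentialLeft E) {x : S} (hx : ∀ e ∈ E, e * x = 0) : x = 0 := by
  refine hS.eq_zero_of_nil x fun t => ?_
  set z := t * x with hz
  let f : ℕ →o Ideal S := ⟨fun n => LinearMap.ker (LinearMap.mulRight S (z ^ n)), by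
    refine monotone_nat_of_le_succ fun n y hy => ?_
    rw [LinearMap.mem_ker, LinearMap.mulRight_apply] at hy ⊢
    rw [pow_succ, ← mul_assoc, hy, zero_mul]⟩
  obtain ⟨n, hn⟩ := (monotone_stabilizes_iff_noetherian (R := S) (M := S)).mpr inferInstance f
  refine ⟨n, ?_⟩
  by_contra h0
  obtain ⟨r, hr0, hrz⟩ : ∃ r, r * z ^ n ≠ 0 ∧ r * z ^ n * z = 0 := by
    by_cases h1 : z ^ n * t = 0
    · exact ⟨1, by simpa using h0, by rw [hz, one_mul, ← mul_assoc, ← hz, h1, zero_mul]⟩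
    · obtain ⟨r, hr0, hrE⟩ := hE _ h1
      by_cases h2 : r * z ^ n = 0
      · rw [← mul_assoc, h2, zero_mul] at hr0
        exact absurd rfl hr0
      · refine ⟨r, h2, ?_⟩
        have := hx _ hrE
        rw [hz]
        simpa only [mul_assoc] using this
  have h1 : r ∈ f n := by
    rw [hn (n + 1) (by omega)]
    simpa [f, pow_succ, mul_assoc] using hrz
  exact hr0 (by simpa [f] using h1)

/-- In a left Noetherian ring, an element with zero left annihilator generates an essential
left ideal. -/
theorem isEssentialLeft_span_singleton {c : S} (hc : ∀ r, r * c = 0 → r = 0) :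
    IsEssentialLeft (Ideal.span {c}) := by
  obtain ⟨n, hn⟩ := exists_eventually_essential (fun n => Ideal.span {c ^ n}) (by
    refine antitone_nat_of_succ_le fun n => ?_
    rw [Ideal.span_singleton_le_iff_mem, pow_succ']
    exact Ideal.mul_mem_left _ _ (Ideal.mem_span_singleton_self _))
  have hcn : ∀ n r, r * c ^ n = 0 → r = 0 := by
    intro n
    induction n with
    | zero => simp
    | succ n ih => intro r hr; rw [pow_succ, ← mul_assoc] at hr; exact ih r (hc _ hr)
  intro x hx
  obtain ⟨r, hr0, hr⟩ := hn (n + 1) n.le_succ (x * c ^ n)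
    (Ideal.mul_mem_left _ _ (Ideal.mem_span_singleton_self _)) (fun h => hx (hcn n x h))
  obtain ⟨y, hy⟩ := Ideal.mem_span_singleton'.mp hr
  have hrx : r * x = y * c := by
    have : (r * x - y * c) * c ^ n = 0 := by
      rw [sub_mul, mul_assoc, mul_assoc, ← pow_succ', hy, sub_self]
    exact sub_eq_zero.mp (hcn n _ this)
  refine ⟨r, fun h => hr0 (by rw [← mul_assoc, h, zero_mul]), ?_⟩
  rw [hrx]
  exact Ideal.mul_mem_left _ _ (Ideal.mem_span_singleton_self _)

/-- Goldie: an essential left ideal of a semiprime left Noetherian ring contains a regular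
element. -/
theorem IsSemiprimeNC.exists_isRegElem_mem (hS : IsSemiprimeNC S) {E : Ideal S}
    (hE : IsEssentialLeft E) : ∃ c ∈ E, IsRegElem c := by
  obtain ⟨c, hcE, hc⟩ := hS.exists_leftAnn_eq_zero hE
  refine ⟨c, hcE, fun x hx => ?_, hc⟩
  refine hS.eq_zero_of_essential_ann (isEssentialLeft_span_singleton hc) fun e he => ?_
  obtain ⟨r, rfl⟩ := Ideal.mem_span_singleton'.mp he
  rw [mul_assoc, hx, mul_zero]

/-- Along a descending chain of left ideals of a semiprime left Noetherian ring, the quotients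
are eventually torsion with respect to the regular elements. -/
theorem IsSemiprimeNC.exists_eventually_torsion (hS : IsSemiprimeNC S) (f : ℕ → Ideal S)
    (hf : Antitone f) :
    ∃ n, ∀ m, n ≤ m → ∀ x ∈ f n, ∃ d, IsRegElem d ∧ d * x ∈ f m := by
  obtain ⟨n, hn⟩ := exists_eventually_essential f hf
  refine ⟨n, fun m hm a ha => ?_⟩
  have hE : IsEssentialLeft (Submodule.comap (LinearMap.mulRight S a) (f m)) := by
    intro x hx
    by_cases h0 : x * a = 0
    · exact ⟨1, by simpa using hx, by simp [h0]⟩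
    · obtain ⟨r, hr0, hr⟩ := hn m hm _ ((f n).mul_mem_left x ha) h0
      refine ⟨r, fun h => hr0 (by rw [← mul_assoc, h, zero_mul]), ?_⟩
      simpa [mul_assoc] using hr
  obtain ⟨d, hd, hreg⟩ := hS.exists_isRegElem_mem hE
  exact ⟨d, hreg, by simpa using hd⟩

end Noetherian

section Nilpotent

variable {R : Type*} [Ring R]

/-- In a left Noetherian ring, the prime radical is nilpotent. -/
theorem exists_primeRadical_pow_eq_bot [IsNoetherianRing R] [(primeRadical R).IsTwoSided] :
    ∃ k, primeRadical R ^ k = ⊥ := by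
  suffices h : ∀ I : Ideal R, I.IsTwoSided → ∃ k, primeRadical R ^ (k + 1) ≤ I by
    obtain ⟨k, hk⟩ := h ⊥ inferInstance
    exact ⟨k + 1, le_bot_iff.mp hk⟩
  refine IsNoetherian.induction fun (I : Ideal R) ih hI => ?_
  by_cases htop : I = ⊤
  · exact ⟨0, htop ▸ le_top⟩
  by_cases hp : I.IsPrimeNC
  · refine ⟨0, ?_⟩
    rw [zero_add, Submodule.pow_one]
    exact sInf_le hp
  have h2 : I.IsTwoSidedNC := fun a ha r => I.mul_mem_right r ha
  obtain ⟨a, b, hab, ha, hb⟩ :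
      ∃ a b : R, (∀ r : R, a * r * b ∈ I) ∧ a ∉ I ∧ b ∉ I := by
    by_contra! h
    exact hp ⟨htop, h2, fun a b hab => or_iff_not_imp_left.mpr (h a b hab)⟩
  have htwo : ∀ c : R, (I ⊔ Ideal.span {x | ∃ r, x = c * r}).IsTwoSided := by
    refine fun c => ⟨fun {y} s hy => ?_⟩
    obtain ⟨u, hu, v, hv, rfl⟩ := Submodule.mem_sup.mp hy
    clear hy
    rw [add_mul]
    refine add_mem (Ideal.mem_sup_left (I.mul_mem_right s hu)) (Ideal.mem_sup_right ?_)
    induction hv using Submodule.span_induction with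
    | mem x hx =>
      obtain ⟨r, rfl⟩ := hx
      exact Ideal.subset_span ⟨r * s, mul_assoc _ _ _⟩
    | zero => simp
    | add x y _ _ hx hy =>
      rw [add_mul]
      exact add_mem hx hy
    | smul t x _ hx =>
      rw [smul_eq_mul, mul_assoc]
      exact Ideal.mul_mem_left _ _ hx
  have hlt : ∀ c : R, c ∉ I → I < I ⊔ Ideal.span {x | ∃ r, x = c * r} := by
    refine fun c hc => lt_of_le_of_ne le_sup_left fun h => hc ?_
    rw [h]
    exact Ideal.mem_sup_right (Ideal.subset_span ⟨1, (mul_one c).symm⟩)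
  have key : ∀ z ∈ Ideal.span {x | ∃ r, x = b * r}, ∀ r : R, a * r * z ∈ I := by
    intro z hz
    induction hz using Submodule.span_induction with
    | zero => simp
    | add x y _ _ hx hy => intro r; rw [mul_add]; exact add_mem (hx r) (hy r)
    | smul t x _ hx => intro r; rw [smul_eq_mul, ← mul_assoc, mul_assoc a]; exact hx _
    | mem x hx =>
      obtain ⟨s, rfl⟩ := hx
      intro r
      rw [← mul_assoc]
      exact I.mul_mem_right _ (hab r)
  obtain ⟨k, hk⟩ := ih _ (hlt a ha) (htwo a)
  obtain ⟨l, hl⟩ := ih _ (hlt b hb) (htwo b)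
  refine ⟨k + 1 + l, ?_⟩
  rw [add_assoc (k + 1), Submodule.pow_add _ l.succ_ne_zero, Ideal.mul_le]
  intro x hx y hy
  obtain ⟨u, hu, v, hv, rfl⟩ := Submodule.mem_sup.mp (hk hx)
  rw [add_mul]
  refine add_mem (I.mul_mem_right _ hu) ?_
  obtain ⟨u', hu', v', hv', rfl⟩ := Submodule.mem_sup.mp (hl hy)
  rw [mul_add]
  refine add_mem (I.mul_mem_left _ hu') ?_
  clear hx hy
  induction hv using Submodule.span_induction with
  | zero => simp
  | add x y _ _ hx hy => rw [add_mul]; exact add_mem hx hy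
  | smul t x _ hx => rw [smul_eq_mul, mul_assoc]; exact I.mul_mem_left _ hx
  | mem x hx =>
    obtain ⟨r, rfl⟩ := hx
    exact key v' hv' r

theorem mul_mem_pow_succ_of_mem_pow {N : Ideal R} [N.IsTwoSided] {x y : R} {k : ℕ} (hx : x ∈ N)
    (hy : y ∈ N ^ k) : x * y ∈ N ^ (k + 1) := by
  rcases eq_or_ne k 0 with rfl | hk
  · rw [zero_add, Submodule.pow_one]
    exact N.mul_mem_right _ hx
  · rw [Submodule.pow_succ' _ hk]
    exact Ideal.mul_mem_mul hx hy

/-- If `N` is a nilpotent ideal and `K < L` are left ideals, some element of `L` outside `K` is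
multiplied into `K` by `N`. -/
theorem exists_mem_forall_mul_mem {N : Ideal R} [N.IsTwoSided] {k : ℕ} (hk : N ^ k = ⊥)
    {K L : Ideal R} {a : R} (haL : a ∈ L) (haK : a ∉ K) :
    ∃ t ∈ L, t ∉ K ∧ ∀ x ∈ N, x * t ∈ K := by
  classical
  have hex : ∃ j, ∀ y ∈ N ^ j, y * a ∈ K :=
    ⟨k, fun y hy => by
      rw [hk, Submodule.mem_bot] at hy
      simp [hy]⟩
  obtain ⟨j, hj⟩ : ∃ j, Nat.find hex = j + 1 := by
    refine Nat.exists_eq_succ_of_ne_zero fun h0 => haK ?_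
    have := Nat.find_spec hex
    rw [h0] at this
    simpa using this 1 (by rw [Submodule.pow_zero, Ideal.one_eq_top]; trivial)
  have hnot := Nat.find_min hex (m := j) (by omega)
  push Not at hnot
  obtain ⟨y, hy, hya⟩ := hnot
  refine ⟨y * a, L.mul_mem_left _ haL, hya, fun x hx => ?_⟩
  rw [← mul_assoc]
  have := Nat.find_spec hex
  rw [hj] at this
  exact this _ (mul_mem_pow_succ_of_mem_pow hx hy)

/-- A nilpotent two-sided ideal is contained in the prime radical. -/
theorem le_primeRadical_of_pow_eq_bot {I : Ideal R} [I.IsTwoSided] {k : ℕ} (hk : I ^ k = ⊥) :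
    I ≤ primeRadical R := by
  refine le_sInf fun P ⟨hP, _, hprime⟩ => ?_
  suffices h : ∀ j, I ^ j ≤ P → I ≤ P from h k (hk ▸ bot_le)
  intro j
  induction j with
  | zero =>
    intro h
    rw [Submodule.pow_zero, Ideal.one_eq_top] at h
    exact absurd (top_le_iff.mp h) hP
  | succ j ih =>
    intro h
    by_contra hn
    obtain ⟨b, hb, hbP⟩ := SetLike.not_le_iff_exists.mp hn
    refine hn (ih fun a ha => ?_)
    refine (hprime a b fun r => h ?_).resolve_right hbP
    rw [Submodule.pow_succ, mul_assoc]
    exact Ideal.mul_mem_mul ha (I.mul_mem_left r hb)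

end Nilpotent

section Quotient

variable {R : Type*} [Ring R] {S : Type*} [Ring S] {π : R →+* S}

theorem isSemiprimeNC_of_ker_eq (hπ : Function.Surjective π)
    (hker : RingHom.ker π = primeRadical R) : IsSemiprimeNC S := by
  intro b hb
  obtain ⟨b, rfl⟩ := hπ b
  rw [← RingHom.mem_ker, hker]
  refine Ideal.mem_sInf.mpr fun {P} hP => ?_
  refine or_self_iff.mp (hP.2.2 b b fun r => ?_)
  have h : b * r * b ∈ RingHom.ker π := by simpa using hb (π r)
  rw [hker] at h
  exact sInf_le hP h

theorem IsRegElem.mul {a b : R} (ha : IsRegElem a) (hb : IsRegElem b) : IsRegElem (a * b) :=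
  ⟨fun x hx => hb.1 x (ha.1 _ (by rwa [← mul_assoc])),
    fun x hx => ha.2 x (hb.2 _ (by rwa [mul_assoc]))⟩

theorem isRegElem_one : IsRegElem (1 : R) := ⟨by simp, by simp⟩

/-- Along a descending chain of left ideals of a left Noetherian ring, the quotients are eventually
torsion with respect to the elements regular modulo the prime radical. -/
theorem exists_eventually_torsion [IsNoetherianRing R] (hπ : Function.Surjective π)
    (hker : RingHom.ker π = primeRadical R) (f : ℕ → Ideal R) (hf : Antitone f) :
    ∃ n, ∀ m, n ≤ m → ∀ x ∈ f n, ∃ d, IsRegElem (π d) ∧ d * x ∈ f m := by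
  have hN : (primeRadical R).IsTwoSided := hker ▸ inferInstance
  obtain ⟨k, hk⟩ := exists_primeRadical_pow_eq_bot (R := R)
  have : IsNoetherianRing S := isNoetherianRing_of_surjective R S π hπ
  have hS := isSemiprimeNC_of_ker_eq hπ hker
  suffices h : ∀ K : Ideal R, ∀ f : ℕ → Ideal R, Antitone f → (∀ i, K ≤ f i) →
      ∃ n, ∀ m, n ≤ m → ∀ x ∈ f n, ∃ d, IsRegElem (π d) ∧ d * x ∈ f m from
    h ⊥ f hf fun _ => bot_le
  intro K
  induction K using IsNoetherian.induction with
  | _ K ih =>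
  intro f hf hKf
  by_cases htop : (1 : R) ∈ K
  · refine ⟨0, fun m _ x _ => ⟨1, by rw [map_one]; exact isRegElem_one, ?_⟩⟩
    rw [(Ideal.eq_top_iff_one _).mpr (hKf m htop)]
    trivial
  obtain ⟨t, -, htK, ht⟩ := exists_mem_forall_mul_mem (L := ⊤) hk trivial htop
  have hlt : K < K ⊔ Ideal.span {t} := lt_of_le_of_ne le_sup_left fun h => htK (by
    rw [h]; exact Ideal.mem_sup_right (Ideal.mem_span_singleton_self t))
  obtain ⟨n₁, h₁⟩ := ih _ hlt (fun i => f i ⊔ (K ⊔ Ideal.span {t}))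
    (fun i j hij => sup_le_sup_right (hf hij) _) (fun i => le_sup_right)
  let g : ℕ → Ideal S := fun i =>
    Ideal.map π (Submodule.comap (LinearMap.mulRight R t) (f i) : Ideal R)
  have hg : ∀ i r, π r ∈ g i ↔ r * t ∈ f i := by
    intro i r
    constructor
    · intro h
      obtain ⟨s, hs, hsr⟩ := (Ideal.mem_map_iff_of_surjective π hπ).mp h
      have h1 : (r - s) * t ∈ f i := hKf i (ht _ (by
        rw [← hker, RingHom.mem_ker, map_sub, hsr, sub_self]))
      have h2 : s * t ∈ f i := by simpa using hs
      have := add_mem h1 h2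
      rwa [← add_mul, sub_add_cancel] at this
    · intro h
      exact Ideal.mem_map_of_mem _ (by simpa using h)
  obtain ⟨n₂, h₂⟩ := hS.exists_eventually_torsion g fun i j hij => by
    intro y hy
    obtain ⟨r, rfl⟩ := hπ y
    rw [hg] at hy ⊢
    exact hf hij hy
  refine ⟨max n₁ n₂, fun m hm x hx => ?_⟩
  obtain ⟨d, hd, hdx⟩ := h₁ m (le_trans (le_max_left _ _) hm) x
    (Ideal.mem_sup_left (hf (le_max_left _ _) hx))
  obtain ⟨u, hu, v, hv, huv⟩ := Submodule.mem_sup.mp hdx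
  obtain ⟨w, hw, z, hz, rfl⟩ := Submodule.mem_sup.mp hv
  obtain ⟨r, rfl⟩ := Ideal.mem_span_singleton'.mp hz
  have hr : r * t ∈ f n₂ := by
    have : r * t = d * x - u - w := by rw [← huv]; abel
    rw [this]
    exact sub_mem (sub_mem (Ideal.mul_mem_left _ _ (hf (le_max_right _ _) hx))
      (hf (le_trans (le_max_right _ _) hm) hu)) (hKf _ hw)
  obtain ⟨e, he, her⟩ := h₂ m (le_trans (le_max_right _ _) hm) (π r) ((hg _ _).mpr hr)
  obtain ⟨e, rfl⟩ := hπ e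
  rw [← map_mul, hg] at her
  refine ⟨e * d, by rw [map_mul]; exact he.mul hd, ?_⟩
  rw [mul_assoc, ← huv, mul_add, mul_add, ← mul_assoc e r t]
  exact add_mem (Ideal.mul_mem_left _ _ hu) (add_mem (Ideal.mul_mem_left _ _ (hKf _ hw)) her)

/-- If right multiplication by `c` is injective and maps the left ideal `K` to itself, then
`K / K c` is torsion. -/
theorem exists_mul_eq_mul_of_leftAnn_eq_zero [IsNoetherianRing R] (hπ : Function.Surjective π)
    (hker : RingHom.ker π = primeRadical R) {c : R} (hc : ∀ r, r * c = 0 → r = 0)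
    {K : Ideal R} (hK : ∀ x ∈ K, x * c ∈ K) {x : R} (hx : x ∈ K) :
    ∃ d, IsRegElem (π d) ∧ ∃ y ∈ K, d * x = y * c := by
  have hpow : ∀ n, ∀ x ∈ K, x * c ^ n ∈ K := by
    intro n
    induction n with
    | zero => simp
    | succ n ih => intro x hx; rw [pow_succ, ← mul_assoc]; exact hK _ (ih x hx)
  have hcn : ∀ n r, r * c ^ n = 0 → r = 0 := by
    intro n
    induction n with
    | zero => simp
    | succ n ih => intro r hr; rw [pow_succ, ← mul_assoc] at hr; exact ih r (hc _ hr)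
  obtain ⟨n, hn⟩ := exists_eventually_torsion hπ hker
    (fun n => Submodule.map (LinearMap.mulRight R (c ^ n)) K) (by
      refine antitone_nat_of_succ_le fun n => ?_
      rintro _ ⟨y, hy, rfl⟩
      exact ⟨y * c, hK y hy, by simp [pow_succ', mul_assoc]⟩)
  obtain ⟨d, hd, y, hy, hyd⟩ := hn (n + 1) n.le_succ _ ⟨x, hx, rfl⟩
  refine ⟨d, hd, y, hy, ?_⟩
  simp only [LinearMap.mulRight_apply] at hyd
  have : (d * x - y * c) * c ^ n = 0 := by
    rw [sub_mul, mul_assoc, mul_assoc y, ← pow_succ', hyd, sub_self]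
  exact sub_eq_zero.mp (hcn n _ this)

/-- If `R / R c` is torsion then so is the kernel of right multiplication by `c`. -/
theorem exists_regular_mul_eq_zero [IsNoetherianRing R] {c : R}
    (hc : ∀ x, ∃ d, IsRegElem (π d) ∧ ∃ y, d * x = y * c) {x : R} (hx : x * c = 0) :
    ∃ d, IsRegElem (π d) ∧ d * x = 0 := by
  have hpow : ∀ n x, ∃ d, IsRegElem (π d) ∧ ∃ y, d * x = y * c ^ n := by
    intro n
    induction n with
    | zero => exact fun x => ⟨1, by rw [map_one]; exact isRegElem_one, x, by simp⟩
    | succ n ih =>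
      intro x
      obtain ⟨d, hd, y, hy⟩ := ih x
      obtain ⟨e, he, z, hz⟩ := hc y
      exact ⟨e * d, by rw [map_mul]; exact he.mul hd, z, by
        rw [mul_assoc, hy, ← mul_assoc, hz, pow_succ', mul_assoc]⟩
  let f : ℕ →o Ideal R := ⟨fun n => LinearMap.ker (LinearMap.mulRight R (c ^ n)), by
    refine monotone_nat_of_le_succ fun n y hy => ?_
    rw [LinearMap.mem_ker, LinearMap.mulRight_apply] at hy ⊢
    rw [pow_succ, ← mul_assoc, hy, zero_mul]⟩
  obtain ⟨n, hn⟩ := (monotone_stabilizes_iff_noetherian (R := R) (M := R)).mpr inferInstance f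
  obtain ⟨d, hd, y, hy⟩ := hpow n x
  refine ⟨d, hd, ?_⟩
  have h1 : y ∈ f n := by
    rw [hn (n + 1) n.le_succ]
    have : y * c ^ (n + 1) = 0 := by rw [pow_succ, ← mul_assoc, ← hy, mul_assoc, hx, mul_zero]
    simpa [f] using this
  rw [hy]
  simpa [f] using h1

/-- If each regular element of `R/n` lifts to a regular element of `R`, every element of `R`
which is regular modulo `n` is regular. -/
theorem isRegElem_of_forall_exists_lift [IsNoetherianRing R] (hπ : Function.Surjective π)
    (hker : RingHom.ker π = primeRadical R)
    (hlift : ∀ α : S, IsRegElem α → ∃ c : R, IsRegElem c ∧ π c = α)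
    {c : R} (hc : IsRegElem (π c)) : IsRegElem c := by
  have hN : (primeRadical R).IsTwoSided := hker ▸ inferInstance
  obtain ⟨k, hk⟩ := exists_primeRadical_pow_eq_bot (R := R)
  have htors : ∀ L : Ideal R, (∀ x ∈ L, ∃ d, IsRegElem (π d) ∧ d * x = 0) → ∀ x ∈ L, x = 0 := by
    intro L hL x hx
    by_contra hx0
    obtain ⟨t, htL, ht0, ht⟩ := exists_mem_forall_mul_mem (K := ⊥) hk hx (by simpa using hx0)
    obtain ⟨d, hd, hdt⟩ := hL t htL
    obtain ⟨e, he, hed⟩ := hlift _ hd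
    refine ht0 (Submodule.mem_bot R |>.mpr (he.1 t ?_))
    have : (e - d) * t = 0 := by
      simpa using ht (e - d) (by rw [← hker, RingHom.mem_ker, map_sub, hed, sub_self])
    rwa [sub_mul, hdt, sub_zero] at this
  obtain ⟨e, he, hec⟩ := hlift _ hc
  have hfil : ∀ i, ∀ x, ∃ d, IsRegElem (π d) ∧ ∃ y, ∃ z ∈ primeRadical R ^ i,
      d * x = y * c + z := by
    intro i
    induction i with
    | zero =>
      exact fun x => ⟨1, by rw [map_one]; exact isRegElem_one, 0, x,
        by rw [Submodule.pow_zero, Ideal.one_eq_top]; trivial, by simp⟩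
    | succ i ih =>
      intro x
      obtain ⟨d, hd, y, z, hz, hdx⟩ := ih x
      obtain ⟨d', hd', w, hw, hdw⟩ := exists_mul_eq_mul_of_leftAnn_eq_zero hπ hker he.2
        (K := primeRadical R ^ i) (fun x hx => Ideal.mul_mem_right _ _ hx) hz
      refine ⟨d' * d, by rw [map_mul]; exact hd'.mul hd, d' * y + w, w * (e - c), ?_, ?_⟩
      · rw [Submodule.pow_succ]
        exact Ideal.mul_mem_mul hw (by rw [← hker, RingHom.mem_ker, map_sub, hec, sub_self])
      · rw [mul_assoc, hdx, mul_add, hdw]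
        noncomm_ring
  have hcok : ∀ x, ∃ d, IsRegElem (π d) ∧ ∃ y, d * x = y * c := by
    intro x
    obtain ⟨d, hd, y, z, hz, h⟩ := hfil k x
    rw [hk, Submodule.mem_bot] at hz
    exact ⟨d, hd, y, by rw [h, hz, add_zero]⟩
  constructor
  · intro r hr
    refine htors (Ideal.span {r}) (fun x hx => ?_) r (Ideal.mem_span_singleton_self r)
    obtain ⟨s, rfl⟩ := Ideal.mem_span_singleton'.mp hx
    obtain ⟨d, hd, y, hy⟩ := hcok s
    exact ⟨d, hd, by rw [← mul_assoc, hy, mul_assoc, hr, mul_zero]⟩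
  · intro r hr
    exact htors (LinearMap.ker (LinearMap.mulRight R c))
      (fun x hx => exists_regular_mul_eq_zero hcok (by simpa using hx)) r (by simpa using hr)

/-- In a left Noetherian ring, regular elements are regular modulo the prime radical. -/
theorem IsRegElem.map_of_ker_eq [IsNoetherianRing R] (hπ : Function.Surjective π)
    (hker : RingHom.ker π = primeRadical R) {c : R} (hc : IsRegElem c) : IsRegElem (π c) := by
  have hcok : ∀ x, ∃ d, IsRegElem (π d) ∧ ∃ y, d * x = y * c := by
    intro x
    obtain ⟨d, hd, y, -, hy⟩ := exists_mul_eq_mul_of_leftAnn_eq_zero hπ hker hc.2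
      (K := ⊤) (fun _ _ => trivial) (x := x) trivial
    exact ⟨d, hd, y, hy⟩
  constructor
  · intro x hx
    obtain ⟨d, hd, y, hy⟩ := hcok 1
    refine hd.1 x ?_
    rw [← mul_one d, hy, map_mul, mul_assoc, hx, mul_zero]
  · intro x hx
    have : IsNoetherianRing S := isNoetherianRing_of_surjective R S π hπ
    obtain ⟨d, hd, hdx⟩ := exists_regular_mul_eq_zero (π := RingHom.id S) (c := π c) (fun s => by
      obtain ⟨r, rfl⟩ := hπ s
      obtain ⟨d, hd, y, hy⟩ := hcok r
      exact ⟨π d, hd, π y, by rw [← map_mul, hy, map_mul]⟩) hx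
    exact hd.1 x hdx

end Quotient

section ArtinianQuotient

variable {R : Type*} [Ring R] {Q : Type*} [Ring Q] {φ : R →+* Q}

/-- Ideals of `R` extend to two-sided ideals of a left Artinian left quotient ring. -/
theorem IsLeftQuotRing.map_isTwoSided [IsArtinianRing Q] (hφ : IsLeftQuotRing φ) (I : Ideal R)
    [I.IsTwoSided] : (I.map φ).IsTwoSided := by
  have hr : ∀ r : R, ∀ j ∈ I.map φ, j * φ r ∈ I.map φ := by
    intro r j hj
    induction hj using Submodule.span_induction with
    | zero => simp
    | add x y _ _ hx hy => rw [add_mul]; exact add_mem hx hy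
    | smul t x _ hx => rw [smul_eq_mul, mul_assoc]; exact Ideal.mul_mem_left _ _ hx
    | mem x hx =>
      obtain ⟨s, hs, rfl⟩ := hx
      rw [← map_mul]
      exact Ideal.mem_map_of_mem _ (I.mul_mem_right r hs)
  refine ⟨fun {j} q hj => ?_⟩
  obtain ⟨c, r, hc, hq⟩ := hφ.denom q
  obtain ⟨u, hu⟩ := hφ.isUnit c hc
  let g : I.map φ →ₗ[Q] I.map φ :=
    (LinearMap.mulRight Q (φ c)).restrict (fun j hj => hr c j hj)
  have hg : Function.Injective g := by
    refine (injective_iff_map_eq_zero _).mpr fun x hx => Subtype.ext ?_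
    have h : (x : Q) * φ c = 0 := congrArg Subtype.val hx
    rw [← hu] at h
    simpa using h
  obtain ⟨⟨i, hi⟩, hij⟩ := (IsArtinian.bijective_of_injective_endomorphism g hg).2 ⟨j, hj⟩
  have hij' : i * φ c = j := congrArg Subtype.val hij
  rw [← hij', mul_assoc, hq]
  exact hr r i hi

theorem IsLeftQuotRing.map_pow_le [IsArtinianRing Q] (hφ : IsLeftQuotRing φ) (I : Ideal R)
    [I.IsTwoSided] (k : ℕ) : I.map φ ^ k ≤ (I ^ k).map φ := by
  have hJ := hφ.map_isTwoSided I
  induction k with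
  | zero =>
    rw [Submodule.pow_zero (M := I), Ideal.one_eq_top, Ideal.map_top]
    exact le_top
  | succ k ih =>
    rw [Submodule.pow_succ, Ideal.mul_le]
    intro y hy j hj
    induction hj using Submodule.span_induction generalizing y with
    | zero => simp
    | add a b _ _ ha hb => rw [mul_add]; exact add_mem (ha y hy) (hb y hy)
    | smul t x _ hx => rw [smul_eq_mul, ← mul_assoc]; exact hx _ (Ideal.mul_mem_right _ _ hy)
    | mem x hx =>
      obtain ⟨s, hs, rfl⟩ := hx
      have hy' := ih hy
      clear hy
      induction hy' using Submodule.span_induction with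
      | zero => simp
      | add a b _ _ ha hb => rw [add_mul]; exact add_mem ha hb
      | smul t x _ hx => rw [smul_eq_mul, mul_assoc]; exact Ideal.mul_mem_left _ _ hx
      | mem x hx =>
        obtain ⟨z, hz, rfl⟩ := hx
        rw [← map_mul]
        exact Ideal.mem_map_of_mem _ (Submodule.pow_succ I ▸ Ideal.mul_mem_mul hz hs)

theorem pow_comap_le_comap_pow (φ : R →+* Q) (J : Ideal Q) (k : ℕ) :
    J.comap φ ^ k ≤ (J ^ k).comap φ := by
  induction k with
  | zero =>
    rw [Submodule.pow_zero (M := J), Ideal.one_eq_top, Ideal.comap_top]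
    exact le_top
  | succ k ih =>
    rw [Submodule.pow_succ, Ideal.mul_le]
    intro x hx y hy
    rw [Ideal.mem_comap, map_mul, Submodule.pow_succ]
    exact Ideal.mul_mem_mul (ih hx) hy

theorem pow_mem_ideal_pow {J : Ideal Q} {x : Q} (hx : x ∈ J) (k : ℕ) : x ^ k ∈ J ^ k := by
  induction k with
  | zero => rw [Submodule.pow_zero, Ideal.one_eq_top]; trivial
  | succ k ih => rw [pow_succ, Submodule.pow_succ]; exact Ideal.mul_mem_mul ih hx

/-- If a left Noetherian ring has a left Artinian left quotient ring, the elements regular modulo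
the prime radical are regular. -/
theorem IsLeftQuotRing.isRegElem_of_isArtinianRing [IsNoetherianRing R] [IsArtinianRing Q]
    (hφ : IsLeftQuotRing φ) {S : Type*} [Ring S] {π : R →+* S}
    (hker : RingHom.ker π = primeRadical R) {c : R} (hc : IsRegElem (π c)) : IsRegElem c := by
  have hN : (primeRadical R).IsTwoSided := hker ▸ inferInstance
  obtain ⟨k, hk⟩ := exists_primeRadical_pow_eq_bot (R := R)
  set J : Ideal Q := (primeRadical R).map φ with hJ
  have hJ2 : J.IsTwoSided := hφ.map_isTwoSided _
  have hJk : J ^ k = ⊥ := le_bot_iff.mp <| (hφ.map_pow_le _ k).trans (by rw [hk, Ideal.map_bot])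
  have hcomap : J.comap φ ≤ primeRadical R := by
    refine le_primeRadical_of_pow_eq_bot (k := k) (le_bot_iff.mp ?_)
    refine (pow_comap_le_comap_pow φ J k).trans fun x hx => ?_
    rw [hJk, Ideal.mem_comap, Ideal.mem_bot] at hx
    exact hφ.inj (by rw [hx, map_zero])
  have hinj : ∀ q, q * φ c ∈ J → q ∈ J := by
    intro q hq
    obtain ⟨s, r, hs, hsr⟩ := hφ.denom q
    have h1 : r * c ∈ RingHom.ker π := by
      rw [hker]
      refine hcomap ?_
      rw [Ideal.mem_comap, map_mul, ← hsr, mul_assoc]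
      exact J.mul_mem_left _ hq
    have h2 : r ∈ primeRadical R := by
      rw [← hker, RingHom.mem_ker]
      exact hc.2 _ (by rw [← map_mul]; exact h1)
    obtain ⟨u, hu⟩ := hφ.isUnit s hs
    have h3 : q = ↑u⁻¹ * φ r := by rw [← hsr, ← hu, Units.inv_mul_cancel_left]
    rw [h3]
    exact J.mul_mem_left _ (Ideal.mem_map_of_mem _ h2)
  have hunit : IsUnit (φ c) := by
    let g : (Q ⧸ J) →ₗ[Q] (Q ⧸ J) := Submodule.mapQ J J (LinearMap.mulRight Q (φ c))
      fun j hj => J.mul_mem_right (φ c) hj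
    have hg : Function.Injective g := by
      refine (injective_iff_map_eq_zero _).mpr fun x => ?_
      obtain ⟨q, rfl⟩ := Submodule.Quotient.mk_surjective J x
      intro hx
      exact (Submodule.Quotient.mk_eq_zero J).mpr
        (hinj q ((Submodule.Quotient.mk_eq_zero J).mp hx))
    obtain ⟨x, hx⟩ := (IsArtinian.bijective_of_injective_endomorphism g hg).2
      (Submodule.Quotient.mk 1)
    obtain ⟨q, rfl⟩ := Submodule.Quotient.mk_surjective J x
    have hq : q * φ c - 1 ∈ J := (Submodule.Quotient.eq J).mp hx
    have hnil : IsNilpotent (q * φ c - 1) :=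
      ⟨k, by simpa [hJk] using pow_mem_ideal_pow hq k⟩
    obtain ⟨v, hv⟩ := hnil.isUnit_one_add
    rw [add_sub_cancel] at hv
    have hinv : (↑v⁻¹ * q) * φ c = 1 := by rw [mul_assoc, ← hv, Units.inv_mul]
    exact IsUnit.of_mul_eq_one_right _ hinv
  obtain ⟨u, hu⟩ := hunit
  constructor
  · intro x hx
    have h : (u : Q) * φ x = 0 := by rw [hu, ← map_mul, hx, map_zero]
    exact hφ.inj (by rw [map_zero]; simpa using h)
  · intro x hx
    have h : φ x * (u : Q) = 0 := by rw [hu, ← map_mul, hx, map_zero]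
    exact hφ.inj (by rw [map_zero]; simpa using h)

end ArtinianQuotient

section NoetherianQuotient

/-- The regular elements of a ring, as a submonoid. -/
def regSubmonoid (R : Type*) [Ring R] : Submonoid R where
  carrier := regSet R
  one_mem' := isRegElem_one
  mul_mem' := IsRegElem.mul

/-- If the regular elements form a left Ore set then the left quotient ring exists. -/
theorem nonempty_leftQuotData {R : Type u} [Ring R]
    (hOre : ∀ c : R, IsRegElem c → ∀ a : R, ∃ d, IsRegElem d ∧ ∃ b, d * a = b * c) :
    Nonempty (LeftQuotData R) := by
  obtain ⟨hset⟩ : Nonempty (OreLocalization.OreSet (regSubmonoid R)) := by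
    refine OreLocalization.nonempty_oreSet_iff.mpr ⟨fun r₁ r₂ s h => ⟨1, ?_⟩, fun r s => ?_⟩
    · have : (r₁ - r₂) * (s : R) = 0 := by rw [sub_mul, h, sub_self]
      rw [sub_eq_zero.mp (s.2.2 _ this)]
    · obtain ⟨d, hd, b, hb⟩ := hOre s s.2 r
      exact ⟨b, ⟨d, hd⟩, hb⟩
  refine ⟨⟨OreLocalization (regSubmonoid R) R, OreLocalization.numeratorRingHom, ?_, ?_, ?_⟩⟩
  · refine OreLocalization.numeratorHom_inj fun s hs => ?_
    exact hs.1
  · exact fun c hc => OreLocalization.numerator_isUnit (⟨c, hc⟩ : regSubmonoid R)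
  · intro q
    induction q using OreLocalization.ind with
    | _ r s =>
    exact ⟨s, r, s.2, OreLocalization.mul_cancel⟩

/-- If the elements of a left Noetherian ring regular modulo the prime radical are regular, then
the ring has a left Artinian left quotient ring. -/
theorem hasArtinianLeftQuot_of_forall_isRegElem {R : Type u} [Ring R] [IsNoetherianRing R]
    {S : Type*} [Ring S] {π : R →+* S} (hπ : Function.Surjective π)
    (hker : RingHom.ker π = primeRadical R) (h : ∀ c : R, IsRegElem (π c) → IsRegElem c) :
    HasArtinianLeftQuot R := by
  obtain ⟨D⟩ := nonempty_leftQuotData (R := R) fun c hc a => by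
    obtain ⟨d, hd, y, -, hy⟩ := exists_mul_eq_mul_of_leftAnn_eq_zero hπ hker hc.2
      (K := ⊤) (fun _ _ => trivial) (x := a) trivial
    exact ⟨d, h d hd, y, hy⟩
  refine ⟨D, monotone_stabilizes_iff_artinian.mp fun f => ?_⟩
  let J : ℕ → Ideal D.Q := fun n => OrderDual.ofDual (f n)
  have hJ : Antitone J := fun i j hij => f.monotone hij
  obtain ⟨n, hn⟩ := exists_eventually_torsion hπ hker (fun n => (J n).comap D.φ)
    fun i j hij => Ideal.comap_mono (hJ hij)
  refine ⟨n, fun m hm => ?_⟩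
  have key : J n = J m := by
    refine le_antisymm (fun q hq => ?_) (hJ hm)
    obtain ⟨c, r, hc, hcr⟩ := D.quot.denom q
    obtain ⟨d, hd, hdr⟩ := hn m hm r (by
      rw [Ideal.mem_comap, ← hcr]
      exact (J n).mul_mem_left _ hq)
    rw [Ideal.mem_comap, map_mul, ← hcr, ← mul_assoc, ← map_mul] at hdr
    obtain ⟨u, hu⟩ := D.quot.isUnit (d * c) ((h d hd).mul hc)
    rw [← hu] at hdr
    simpa using (J m).mul_mem_left (↑u⁻¹) hdr
  exact key

end NoetherianQuotient

/-- **Corollary (`A2Sep12`; Small).** Let `R` be a left Noetherian ring, `n` its prime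
radical, `R̄ = R/n` (realized by a surjective `π` with kernel `n`).  TFAE:
(1) `R` has a left Artinian left quotient ring;
(2) `C' ⊆ C`;
(3) every regular element of `R̄` lifts to a regular element of `R`. -/
theorem left_noetherian_small_criterion
    {R : Type u} [Ring R] [IsNoetherianRing R] (Rbar : Type v) [Ring Rbar] (π : R →+* Rbar)
    (hπsurj : Function.Surjective π) (hπker : RingHom.ker π = primeRadical R) :
    (HasArtinianLeftQuot R ↔ (∀ c : R, IsRegElem (π c) → IsRegElem c)) ∧
    ((∀ c : R, IsRegElem (π c) → IsRegElem c) ↔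
      (∀ α : Rbar, IsRegElem α → ∃ c : R, IsRegElem c ∧ π c = α)) := by
  have h23 : (∀ c : R, IsRegElem (π c) → IsRegElem c) ↔
      (∀ α : Rbar, IsRegElem α → ∃ c : R, IsRegElem c ∧ π c = α) :=
    ⟨fun h α hα => by
      obtain ⟨c, rfl⟩ := hπsurj α
      exact ⟨c, h c hα, rfl⟩,
      fun h c hc => isRegElem_of_forall_exists_lift hπsurj hπker h hc⟩
  refine ⟨⟨?_, hasArtinianLeftQuot_of_forall_isRegElem hπsurj hπker⟩, h23⟩
  rintro ⟨D, hD⟩ c hc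
  exact D.quot.isRegElem_of_isArtinianRing hπker hc
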